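/- Let H be a complex separable Hilbert space, (e_j)_{j≥1} an orthonormal basis, (λ_j)_{j≥1} a nondecreasing sequence of positive reals, L(t) a family of symmetric operators from H¹(Γ) to H, ε > 0, and N > 0. Suppose φ : [a,b] → H is continuous, and for every t ∈ (a,b), φ(t) ∈ H²(Γ), φ has derivative i·L(t)φ(t) − ε·Γφ(t) at t, and ‖φ(t)‖₁² ≥ N‖φ(t)‖². Then ‖φ(b)‖² ≤ e^{−2εN(b−a)}‖φ(a)‖². -/

import Mathlib

/-!
Symmetry makes `⟪φ, L φ⟫` real, so the term `i L φ` does not contribute to the derivative of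
`‖φ‖²`, which is therefore `-2ε ⟪φ, Γφ⟫ = -2ε ‖φ‖₁² ≤ -2εN ‖φ‖²`; Grönwall's inequality concludes.
That `⟪φ, Γφ⟫` equals `‖φ‖₁²`, and in particular that `H²(Γ) ⊆ H¹(Γ)`, is Parseval's identity for
the pair `φ, Γφ`.
-/

open scoped InnerProductSpace ENNReal
open MeasureTheory

/-- The (squared) homogeneous `H¹(Γ)` norm: `‖ψ‖₁² = Σ_j λ_j |⟨e_j, ψ⟩|² ∈ [0,∞]`. -/
noncomputable def H1normSq {H : Type*} [NormedAddCommGroup H] [InnerProductSpace ℂ H]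
    (e : ℕ → H) (lam : ℕ → ℝ) (ψ : H) : ℝ≥0∞ :=
  ∑' j, ENNReal.ofReal (lam j * ‖⟪e j, ψ⟫_ℂ‖ ^ 2)

/-- `ψ ∈ H¹(Γ)`. -/
def MemH1 {H : Type*} [NormedAddCommGroup H] [InnerProductSpace ℂ H]
    (e : ℕ → H) (lam : ℕ → ℝ) (ψ : H) : Prop :=
  H1normSq e lam ψ ≠ ⊤

/-- `ψ ∈ H²(Γ)`, i.e. `Σ_j λ_j² |⟨e_j, ψ⟩|² < ∞`. -/
def MemH2 {H : Type*} [NormedAddCommGroup H] [InnerProductSpace ℂ H]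
    (e : ℕ → H) (lam : ℕ → ℝ) (ψ : H) : Prop :=
  (∑' j, ENNReal.ofReal ((lam j) ^ 2 * ‖⟪e j, ψ⟫_ℂ‖ ^ 2)) ≠ ⊤

/-- `Γψ = Σ_j λ_j ⟨e_j, ψ⟩ e_j` (defined as a `tsum`; meaningful for `ψ ∈ H²(Γ)`). -/
noncomputable def Gam {H : Type*} [NormedAddCommGroup H] [InnerProductSpace ℂ H]
    [CompleteSpace H] (e : ℕ → H) (lam : ℕ → ℝ) (ψ : H) : H :=
  ∑' j, ((lam j : ℂ) * ⟪e j, ψ⟫_ℂ) • e j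

theorem le_exp_mul_of_hasDerivAt_le_mul {u u' : ℝ → ℝ} {K a b : ℝ} (hab : a ≤ b)
    (hu : ContinuousOn u (Set.Icc a b)) (hu' : ∀ t ∈ Set.Ioo a b, HasDerivAt u (u' t) t)
    (hle : ∀ t ∈ Set.Ioo a b, u' t ≤ K * u t) :
    u b ≤ Real.exp (K * (b - a)) * u a := by
  have hanti : AntitoneOn (fun t => Real.exp (K * (b - t)) * u t) (Set.Icc a b) := by
    refine antitoneOn_of_hasDerivWithinAt_nonpos (convex_Icc a b)
      (f' := fun t => Real.exp (K * (b - t)) * (u' t - K * u t)) (by fun_prop) ?_ ?_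
    all_goals rw [interior_Icc]; intro t ht
    · have hexp := (((hasDerivAt_id t).const_sub b).const_mul K).exp
      refine ((hexp.mul (hu' t ht)).congr_deriv ?_).hasDerivWithinAt
      simp only [id]
      ring
    · exact mul_nonpos_of_nonneg_of_nonpos (Real.exp_pos _).le (sub_nonpos.2 (hle t ht))
  simpa using hanti (Set.left_mem_Icc.2 hab) (Set.right_mem_Icc.2 hab) hab

section RCLike

variable {𝕜 E : Type*} [RCLike 𝕜] [NormedAddCommGroup E] [InnerProductSpace 𝕜 E]

theorem re_inner_I_smul_eq_zero {x y : E} (hxy : ⟪y, x⟫_𝕜 = ⟪x, y⟫_𝕜) :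
    RCLike.re ⟪x, (RCLike.I : 𝕜) • y⟫_𝕜 = 0 := by
  have him : RCLike.im ⟪x, y⟫_𝕜 = 0 :=
    RCLike.conj_eq_iff_im.1 ((inner_conj_symm y x).trans hxy)
  rw [inner_smul_right, RCLike.I_mul_re, him, neg_zero]

variable (𝕜) [NormedSpace ℝ E]

theorem hasDerivAt_norm_sq {φ : ℝ → E} {v : E} {t : ℝ} (hφ : HasDerivAt φ v t) :
    HasDerivAt (fun s => ‖φ s‖ ^ 2) (2 * RCLike.re ⟪φ t, v⟫_𝕜) t := by
  have hre := RCLike.reCLM.hasFDerivAt.comp_hasDerivAt t (hφ.inner 𝕜 hφ)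
  refine (hre.congr_deriv ?_).congr_of_eventuallyEq
    (.of_forall fun s => (inner_self_eq_norm_sq (𝕜 := 𝕜) (φ s)).symm)
  rw [RCLike.reCLM_apply, map_add, inner_re_symm v, two_mul]

theorem norm_sq_le_exp_mul_of_re_inner_deriv_le {φ φ' : ℝ → E} {K a b : ℝ} (hab : a ≤ b)
    (hφ : ContinuousOn φ (Set.Icc a b)) (hφ' : ∀ t ∈ Set.Ioo a b, HasDerivAt φ (φ' t) t)
    (hle : ∀ t ∈ Set.Ioo a b, RCLike.re ⟪φ t, φ' t⟫_𝕜 ≤ K * ‖φ t‖ ^ 2) :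
    ‖φ b‖ ^ 2 ≤ Real.exp (2 * K * (b - a)) * ‖φ a‖ ^ 2 := by
  refine le_exp_mul_of_hasDerivAt_le_mul (u := fun t => ‖φ t‖ ^ 2) hab (hφ.norm.pow 2)
    (fun t ht => hasDerivAt_norm_sq 𝕜 (hφ' t ht)) fun t ht => ?_
  linarith [hle t ht]

end RCLike

section Gamma

variable {H : Type*} [NormedAddCommGroup H] [InnerProductSpace ℂ H] {lam : ℕ → ℝ} {ψ : H}

theorem MemH2.memℓp {e : ℕ → H} (hψ : MemH2 e lam ψ) :
    Memℓp (fun j => (lam j : ℂ) * ⟪e j, ψ⟫_ℂ) 2 := by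
  have hsum : Summable fun j => lam j ^ 2 * ‖⟪e j, ψ⟫_ℂ‖ ^ 2 :=
    (ENNReal.summable_toReal hψ).congr fun j => ENNReal.toReal_ofReal (by positivity)
  exact memℓp_gen (by simpa [mul_pow] using hsum)

variable [CompleteSpace H] {e : HilbertBasis ℕ ℂ H}

theorem MemH2.inner_Gam (hψ : MemH2 e lam ψ) (j : ℕ) :
    ⟪e j, Gam e lam ψ⟫_ℂ = lam j * ⟪e j, ψ⟫_ℂ := by
  let c : lp (fun _ : ℕ => ℂ) 2 := ⟨_, hψ.memℓp⟩
  have hGam : Gam e lam ψ = e.repr.symm c := (e.hasSum_repr_symm c).tsum_eq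
  rw [← e.repr_apply_apply, hGam, LinearIsometryEquiv.apply_symm_apply]

theorem MemH2.hasSum_re_inner_Gam (hψ : MemH2 e lam ψ) :
    HasSum (fun j => lam j * ‖⟪e j, ψ⟫_ℂ‖ ^ 2) (⟪ψ, Gam e lam ψ⟫_ℂ).re := by
  convert! Complex.hasSum_re (e.hasSum_inner_mul_inner ψ (Gam e lam ψ)) using 2 with j
  rw [hψ.inner_Gam, mul_left_comm, Complex.re_ofReal_mul, ← inner_conj_symm ψ, Complex.conj_mul',
    ← Complex.ofReal_pow, Complex.ofReal_re]

theorem MemH2.H1normSq_eq (hψ : MemH2 e lam ψ) (hlam : ∀ j, 0 ≤ lam j) :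
    H1normSq e lam ψ = ENNReal.ofReal (⟪ψ, Gam e lam ψ⟫_ℂ).re := by
  have hsum := hψ.hasSum_re_inner_Gam
  rw [← hsum.tsum_eq, ENNReal.ofReal_tsum_of_nonneg
    (fun j => mul_nonneg (hlam j) (sq_nonneg _)) hsum.summable, H1normSq]

theorem MemH2.memH1 (hψ : MemH2 e lam ψ) (hlam : ∀ j, 0 ≤ lam j) : MemH1 e lam ψ := by
  rw [MemH1, hψ.H1normSq_eq hlam]
  exact ENNReal.ofReal_ne_top

theorem MemH2.le_re_inner_Gam (hψ : MemH2 e lam ψ) (hlam : ∀ j, 0 ≤ lam j) {r : ℝ}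
    (hr : ENNReal.ofReal r ≤ H1normSq e lam ψ) : r ≤ (⟪ψ, Gam e lam ψ⟫_ℂ).re := by
  have hnonneg : 0 ≤ (⟪ψ, Gam e lam ψ⟫_ℂ).re :=
    hψ.hasSum_re_inner_Gam.nonneg fun j => mul_nonneg (hlam j) (sq_nonneg _)
  rwa [hψ.H1normSq_eq hlam, ENNReal.ofReal_le_ofReal_iff hnonneg] at hr

end Gamma

theorem statement1_general {H : Type*} [NormedAddCommGroup H] [InnerProductSpace ℂ H]
    [CompleteSpace H] (e : HilbertBasis ℕ ℂ H) {lam : ℕ → ℝ} (hlam : ∀ j, 0 ≤ lam j)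
    {L : ℝ → H → H} (hL : ∀ t x, MemH1 e lam x → ⟪L t x, x⟫_ℂ = ⟪x, L t x⟫_ℂ)
    {ε : ℝ} (hε : 0 ≤ ε) {N a b : ℝ} (hab : a ≤ b) {φ : ℝ → H}
    (hφcont : ContinuousOn φ (Set.Icc a b))
    (hφH2 : ∀ t ∈ Set.Ioo a b, MemH2 e lam (φ t))
    (hφderiv : ∀ t ∈ Set.Ioo a b,
      HasDerivAt φ (Complex.I • L t (φ t) - ε • Gam e lam (φ t)) t)
    (hφlarge : ∀ t ∈ Set.Ioo a b, ENNReal.ofReal (N * ‖φ t‖ ^ 2) ≤ H1normSq e lam (φ t)) :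
    ‖φ b‖ ^ 2 ≤ Real.exp (-(2 * ε * N * (b - a))) * ‖φ a‖ ^ 2 := by
  have hdissip : ∀ t ∈ Set.Ioo a b,
      (⟪φ t, Complex.I • L t (φ t) - ε • Gam e lam (φ t)⟫_ℂ).re ≤ -(ε * N) * ‖φ t‖ ^ 2 := by
    intro t ht
    have hH2 := hφH2 t ht
    have hreal : (⟪φ t, Complex.I • L t (φ t)⟫_ℂ).re = 0 :=
      re_inner_I_smul_eq_zero (hL t (φ t) (hH2.memH1 hlam))
    calc (⟪φ t, Complex.I • L t (φ t) - ε • Gam e lam (φ t)⟫_ℂ).re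
        = -(ε * (⟪φ t, Gam e lam (φ t)⟫_ℂ).re) := by
          rw [inner_sub_right, Complex.sub_re, hreal, inner_smul_right_eq_smul, Complex.smul_re,
            smul_eq_mul, zero_sub]
      _ ≤ -(ε * (N * ‖φ t‖ ^ 2)) := by
          gcongr
          exact hH2.le_re_inner_Gam hlam (hφlarge t ht)
      _ = -(ε * N) * ‖φ t‖ ^ 2 := by ring
  convert norm_sq_le_exp_mul_of_re_inner_deriv_le ℂ hab hφcont hφderiv hdissip using 3
  ring

/-- Lemma `large`: if `‖φ(t)‖₁² ≥ N‖φ(t)‖²` on `(a,b)`, then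
`‖φ(b)‖² ≤ e^{−2εN(b−a)} ‖φ(a)‖²`. -/
theorem statement1 {H : Type*} [NormedAddCommGroup H] [InnerProductSpace ℂ H]
    [CompleteSpace H] [TopologicalSpace.SeparableSpace H]
    (e : HilbertBasis ℕ ℂ H) (lam : ℕ → ℝ)
    (hlam_pos : ∀ j, 0 < lam j) (hlam_mono : Monotone lam)
    (L : ℝ → H →ₗ[ℂ] H)
    (hLsym : ∀ t : ℝ, ∀ x y : H, MemH1 (⇑e) lam x → MemH1 (⇑e) lam y →
      ⟪L t x, y⟫_ℂ = ⟪x, L t y⟫_ℂ)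
    (ε : ℝ) (hε : 0 < ε) (N : ℝ) (hN : 0 < N)
    (a b : ℝ) (hab : a ≤ b) (φ : ℝ → H)
    (hφcont : ContinuousOn φ (Set.Icc a b))
    (hφH2 : ∀ t ∈ Set.Ioo a b, MemH2 (⇑e) lam (φ t))
    (hφderiv : ∀ t ∈ Set.Ioo a b,
      HasDerivAt φ (Complex.I • L t (φ t) - ε • Gam (⇑e) lam (φ t)) t)
    (hφlarge : ∀ t ∈ Set.Ioo a b,
      ENNReal.ofReal (N * ‖φ t‖ ^ 2) ≤ H1normSq (⇑e) lam (φ t)) :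
    ‖φ b‖ ^ 2 ≤ Real.exp (-(2 * ε * N * (b - a))) * ‖φ a‖ ^ 2 :=
  statement1_general e (fun j => (hlam_pos j).le) (fun t x hx => hLsym t x x hx hx) hε.le hab
    hφcont hφH2 hφderiv hφlarge
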